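/- arXiv:1612.04716 — 3 statements merged into one kernel-verified Lean document; each statement's English description precedes it below -/
import Mathlib

section
/- Let Γ be a countable directed graph, F : Γ_Ar → ℝ a potential and β ∈ ℝ. The map m ↦ (m(Z(v)))_{v ∈ Γ_V} is a bijection from the set of e^{βF}-conformal measures on P(Γ) onto the set of A(β)-harmonic vectors; moreover, the e^{βF}-conformal measure m_ψ corresponding to an A(β)-harmonic vector ψ is the unique one satisfying m_ψ(Z(μ)) = e^{−βF(μ)} ψ_{r(μ)} for every finite path μ in Γ. -/
/-!
If `m` is conformal then `m (Z(a) ∩ σ⁻¹ C) = e^{-βF(a)} m (C ∩ Z(r(a)))` for every arrow `a` and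
Borel set `C` (`scaling_iff`). With `C` the whole space and `Z(v)` the disjoint union of the `Z(a)`,
`s(a) = v`, this gives harmonicity of `v ↦ m (Z(v))`; with `C` a cylinder, induction gives
`m (Z(μ)) = e^{-βF(μ)} m (Z(r(μ)))`. Hence a conformal measure is determined on all cylinders by the
vector `m (Z(v))`, and cylinders form a generating π-system containing a countable cover by sets of
finite measure, so the map is injective.

Conversely, a harmonic vector `ψ` makes `e^{-βF(b)} ψ(r(b)) / ψ(r(a))`, for `s(b) = r(a)`, the
transition probabilities of a Markov chain on arrows. Started from the (possibly infinite) measure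
with weights `e^{-βF(a)} ψ(r(a))`, the chain has a law on `ℕ → A` by the Ionescu-Tulcea theorem, and
this law is carried by the infinite paths and gives `Z(μ)` the mass `e^{-βF(μ)} ψ(r(μ))`
(`exists_measure`). The two sides of `scaling_iff` are then finite measures agreeing on cylinders,
so the measure is conformal (`exists_conformal`).
-/

open MeasureTheory Filter Topology
open scoped ENNReal NNReal

namespace GraphKMS

variable {V A : Type}

/-- The space `P(Γ)` of infinite paths of a directed graph with vertex set `V`,
arrow set `A`, source map `s` and range map `r`. -/
structure PathSpace (s r : A → V) : Type where
  seq : ℕ → A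
  compat : ∀ i, r (seq i) = s (seq (i + 1))

/-- The Borel σ-algebra of `P(Γ)`, i.e. the trace on `P(Γ)` of the Borel σ-algebra of the
product `A^ℕ` with `A` discrete. -/
instance (s r : A → V) : MeasurableSpace (PathSpace s r) :=
  MeasurableSpace.comap (fun p => p.seq) (@MeasurableSpace.pi ℕ (fun _ => A) (fun _ => ⊤))

/-- The shift map `σ`. -/
def shift (s r : A → V) (p : PathSpace s r) : PathSpace s r :=
  ⟨fun i => p.seq (i + 1), fun i => p.compat (i + 1)⟩

/-- The cylinder set `Z(v)` of a vertex. -/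
def cylV (s r : A → V) (v : V) : Set (PathSpace s r) := {p | s (p.seq 0) = v}

/-- The cylinder set `Z(a)` of an arrow. -/
def cylA (s r : A → V) (a : A) : Set (PathSpace s r) := {p | p.seq 0 = a}

/-- A finite path: a source vertex together with a compatible list of arrows.
The empty list corresponds to the path of length `0` given by the vertex `src`. -/
structure FinPath (s r : A → V) : Type where
  src : V
  arrows : List A
  head_src : ∀ h : arrows ≠ [], s (arrows.head h) = src
  chain : arrows.Chain' (fun a b => r a = s b)

/-- The range `r(μ)` of a finite path. -/
def finRng (s r : A → V) (μ : FinPath s r) : V :=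
  match μ.arrows.getLast? with
  | none => μ.src
  | some a => r a

/-- The additive extension `F(μ)` of a potential to finite paths. -/
def finWt (s r : A → V) (F : A → ℝ) (μ : FinPath s r) : ℝ := (μ.arrows.map F).sum

/-- The cylinder set `Z(μ)` of a finite path. -/
def finCyl (s r : A → V) (μ : FinPath s r) : Set (PathSpace s r) :=
  {p | s (p.seq 0) = μ.src ∧ ∀ i : Fin μ.arrows.length, p.seq i.1 = μ.arrows.get i}

/-- The set of vertices occurring in a finite path. -/
def finVerts (s r : A → V) (μ : FinPath s r) : Set V :=
  {μ.src} ∪ {v | ∃ a ∈ μ.arrows, s a = v ∨ r a = v}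

/-- The entries of the matrix `A(β)`. -/
noncomputable def Amat (s r : A → V) (F : A → ℝ) (β : ℝ) (v w : V) : ℝ≥0∞ :=
  ∑' a : {a : A // s a = v ∧ r a = w}, ENNReal.ofReal (Real.exp (-(β * F a.1)))

/-- Powers of a `[0,∞]`-valued matrix. -/
noncomputable def matPow (M : V → V → ℝ≥0∞) : ℕ → V → V → ℝ≥0∞
  | 0 => fun v w => ({v} : Set V).indicator (fun _ => (1 : ℝ≥0∞)) w
  | n + 1 => fun v w => ∑' u : V, M v u * matPow M n u w

/-- The entries of `A(β)ⁿ`. -/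
noncomputable def Apow (s r : A → V) (F : A → ℝ) (β : ℝ) (n : ℕ) (v w : V) : ℝ≥0∞ :=
  matPow (Amat s r F β) n v w

/-- The Green function `Σₙ A(β)ⁿ_{v,w}`. -/
noncomputable def Green (s r : A → V) (F : A → ℝ) (β : ℝ) (v w : V) : ℝ≥0∞ :=
  ∑' n : ℕ, Apow s r F β n v w

/-- The Martin kernel `K_β(v,w)` with base point `v₀`. -/
noncomputable def MartinK (s r : A → V) (F : A → ℝ) (β : ℝ) (v₀ v w : V) : ℝ≥0∞ :=
  Green s r F β v w / Green s r F β v₀ w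

/-- A harmonic vector for a `[0,∞]`-valued matrix: a nonzero, finite-valued,
nonnegative vector fixed by the matrix. -/
def IsHarmonic (M : V → V → ℝ≥0∞) (ψ : V → ℝ≥0∞) : Prop :=
  ψ ≠ 0 ∧ (∀ v, ψ v ≠ ∞) ∧ ∀ v, (∑' w : V, M v w * ψ w) = ψ v

/-- A minimal harmonic vector. -/
def IsMinimalHarmonic (M : V → V → ℝ≥0∞) (ψ : V → ℝ≥0∞) : Prop :=
  IsHarmonic M ψ ∧ ∀ φ : V → ℝ≥0∞, IsHarmonic M φ → (∀ v, φ v ≤ ψ v) →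
    ∃ c : ℝ≥0, 0 < c ∧ ∀ v, φ v = (c : ℝ≥0∞) * ψ v

/-- An `e^{βF}`-conformal measure: a nonzero Borel measure which is finite on the
cylinders of vertices and satisfies `m(σ(B ∩ Z(a))) = e^{βF(a)} m(B ∩ Z(a))`. -/
def Conformal (s r : A → V) (F : A → ℝ) (β : ℝ) (m : Measure (PathSpace s r)) : Prop :=
  m ≠ 0 ∧ (∀ v : V, m (cylV s r v) ≠ ∞) ∧
    ∀ (a : A) (B : Set (PathSpace s r)), MeasurableSet B →
      m (shift s r '' (B ∩ cylA s r a)) =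
        ENNReal.ofReal (Real.exp (β * F a)) * m (B ∩ cylA s r a)

/-- An extremal conformal measure: every conformal measure dominated by it is a
positive scalar multiple of it. -/
def ExtremalConformal (s r : A → V) (F : A → ℝ) (β : ℝ) (m : Measure (PathSpace s r)) : Prop :=
  Conformal s r F β m ∧ ∀ m' : Measure (PathSpace s r), Conformal s r F β m' →
    (∀ B : Set (PathSpace s r), MeasurableSet B → m' B ≤ m B) →
    ∃ c : ℝ≥0, 0 < c ∧ m' = (c : ℝ≥0∞) • m

/-- A wandering path: its vertices leave every finite set of vertices. -/
def Wandering (s r : A → V) (p : PathSpace s r) : Prop :=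
  ∀ F₀ : Finset V, ∃ N : ℕ, ∀ i, N ≤ i → s (p.seq i) ∉ F₀

/-- A ray: an infinite path with pairwise distinct vertices. -/
def IsRay (s r : A → V) (p : PathSpace s r) : Prop :=
  Function.Injective fun i => s (p.seq i)

/-- The relation `p → q` between (wandering) paths. -/
def Leads (s r : A → V) (p q : PathSpace s r) : Prop :=
  ∀ (F₀ : Finset V) (N : ℕ), ∃ n₁ n₂ : ℕ, N ≤ n₁ ∧ N ≤ n₂ ∧
    ∃ μ : FinPath s r, μ.src = s (p.seq n₁) ∧ finRng s r μ = s (q.seq n₂) ∧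
      ∀ v ∈ finVerts s r μ, v ∉ F₀

/-- Nonempty path lists from `v` to `w`. -/
def IsPathList (s r : A → V) (l : List A) (v w : V) : Prop :=
  l ≠ [] ∧ l.Chain' (fun a b => r a = s b) ∧
    (∀ h : l ≠ [], s (l.head h) = v) ∧ ∀ h : l ≠ [], r (l.getLast h) = w

/-- The set `L_j(y)` (zero-indexed in `j`). -/
def Lset (s r : A → V) (p : PathSpace s r) (j : ℕ) : Set (List A) :=
  {l | IsPathList s r l (s (p.seq j)) (s (p.seq (j + 1))) ∧
    ∀ a ∈ l, ∀ i ≤ j, r a ≠ s (p.seq i)}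

/-- The sum `Σ_{μ ∈ L_j(y)} e^{-βF(μ)}`. -/
noncomputable def LSum (s r : A → V) (F : A → ℝ) (β : ℝ) (p : PathSpace s r) (j : ℕ) : ℝ≥0∞ :=
  ∑' l : Lset s r p j, ENNReal.ofReal (Real.exp (-(β * (l.1.map F).sum)))

/-- The product `𝕎(y[1,k+1[)` (zero-indexed: the product of the first `k` level sums). -/
noncomputable def Wprod (s r : A → V) (F : A → ℝ) (β : ℝ) (p : PathSpace s r) (k : ℕ) : ℝ≥0∞ :=
  ∏ j ∈ Finset.range k, LSum s r F β p j

/-- `𝕍_β(v,y)`: the limit of the nondecreasing sequence of quotients. -/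
noncomputable def Vbeta (s r : A → V) (F : A → ℝ) (β : ℝ) (v : V) (p : PathSpace s r) : ℝ≥0∞ :=
  Filter.limsup (fun k => Green s r F β v (s (p.seq k)) / Wprod s r F β p k) Filter.atTop

/-- `B_k(y)` (zero-indexed in `k`). -/
def Bset (s r : A → V) (p : PathSpace s r) (k : ℕ) : Set (PathSpace s r) :=
  {x | s (x.seq 0) = s (p.seq k) ∧ ∀ i, 1 ≤ i → ∀ j ≤ k, s (x.seq i) ≠ s (p.seq j)}

/-- `𝔹_k(y)` (zero-indexed in `k`). -/
def BBset (s r : A → V) (p : PathSpace s r) (k : ℕ) : Set (PathSpace s r) :=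
  Bset s r p k ∩ ⋂ (j : ℕ) (_ : k + 1 ≤ j), ⋃ i : ℕ, (shift s r)^[i] ⁻¹' Bset s r p j

/-- `𝔹(y)`. -/
def BB (s r : A → V) (p : PathSpace s r) : Set (PathSpace s r) :=
  ⋃ (n : ℕ) (k : ℕ), (shift s r)^[n] ⁻¹' ((shift s r)^[k] '' BBset s r p 0)

/-- A simple path from `v` to `w`: no arrow except possibly the last one has range `w`. -/
def IsSimplePath (s r : A → V) (v w : V) (l : List A) : Prop :=
  IsPathList s r l v w ∧ ∀ a ∈ l.dropLast, r a ≠ w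

/-- `R_{βF}(v,w)`: the sum of `e^{-βF(ν)}` over all simple paths `ν` from `v` to `w`. -/
noncomputable def Rsum (s r : A → V) (F : A → ℝ) (β : ℝ) (v w : V) : ℝ≥0∞ :=
  ∑' l : {l : List A // IsSimplePath s r v w l},
    ENNReal.ofReal (Real.exp (-(β * (l.1.map F).sum)))

open Classical in
/-- The restriction of a matrix to a subset of the index set (extended by `0`). -/
noncomputable def restrMat (M : V → V → ℝ≥0∞) (S : Set V) (v w : V) : ℝ≥0∞ :=
  if v ∈ S ∧ w ∈ S then M v w else 0

/-- A loop: a nonempty path list whose range equals its source. -/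
def IsLoop (s r : A → V) (l : List A) : Prop :=
  l ≠ [] ∧ l.Chain' (fun a b => r a = s b) ∧
    ∀ h : l ≠ [], r (l.getLast h) = s (l.head h)

/-! ### Markov chains on a countable set -/

/-- The law of a discrete Markov chain started at `a`, given by the Ionescu-Tulcea theorem. -/
theorem markov_chain_from {A : Type} [Countable A] [MeasurableSpace A]
    [DiscreteMeasurableSpace A] (q : A → PMF A) (a : A) :
    ∃ M : Measure (ℕ → A), ∀ (n : ℕ) (x : ℕ → A),
      M {y | ∀ i ≤ n, y i = x i} =
        ({a} : Set A).indicator 1 (x 0) * ∏ i ∈ Finset.range n, q (x i) (x (i + 1)) := by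
  classical
  let κ : (n : ℕ) → ProbabilityTheory.Kernel ((i : Finset.Iic n) → A) A := fun n =>
    (ProbabilityTheory.Kernel.ofFunOfCountable fun b : A => (q b).toMeasure).comap
      (fun x => x ⟨n, Finset.mem_Iic.2 le_rfl⟩) (measurable_pi_apply _)
  have hκ : ∀ n x, κ n x = (q (x ⟨n, Finset.mem_Iic.2 le_rfl⟩)).toMeasure := fun n x => rfl
  have : ∀ n, ProbabilityTheory.IsMarkovKernel (κ n) := fun n =>
    ⟨fun x => by rw [hκ]; infer_instance⟩
  refine ⟨ProbabilityTheory.Kernel.traj (X := fun _ => A) κ 0 (fun _ => a), fun n => ?_⟩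
  have hset : ∀ (n : ℕ) (x : ℕ → A), {y : ℕ → A | ∀ i ≤ n, y i = x i} =
      Preorder.frestrictLe (π := fun _ => A) n ⁻¹' {Preorder.frestrictLe (π := fun _ => A) n x} := by
    intro n x
    ext y
    simp [funext_iff]
  induction n with
  | zero =>
    intro x
    rw [hset, ← Measure.map_apply (Preorder.measurable_frestrictLe 0) (measurableSet_singleton _),
      ProbabilityTheory.Kernel.traj_map_frestrictLe_apply,
      ProbabilityTheory.Kernel.partialTraj_self, ProbabilityTheory.Kernel.id_apply,
      Measure.dirac_apply' _ (measurableSet_singleton _)]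
    have hiff : ((fun _ => a : (i : Finset.Iic 0) → A) = Preorder.frestrictLe (π := fun _ => A) 0 x)
        ↔ x 0 = a := by
      constructor
      · intro h
        exact (congrFun h ⟨0, by simp⟩).symm
      · rintro rfl
        ext ⟨i, hi⟩
        have : i = 0 := by simpa using hi
        subst this
        rfl
    by_cases h : x 0 = a
    · simp [Set.indicator, h, hiff]
    · simp [Set.indicator, h, hiff]
  | succ n ih =>
    intro x
    have hset' : {y : ℕ → A | ∀ i ≤ n + 1, y i = x i} =
        (fun y => (Preorder.frestrictLe (π := fun _ => A) n y, y (n + 1))) ⁻¹'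
          ({Preorder.frestrictLe (π := fun _ => A) n x} ×ˢ {x (n + 1)}) := by
      ext y
      simp only [Set.mem_ofPred_eq, Set.mem_preimage, Set.mem_prod, Set.mem_singleton_iff,
        funext_iff, Subtype.forall, Finset.mem_Iic, Preorder.frestrictLe_apply]
      constructor
      · exact fun h => ⟨fun i hi => h i (by omega), h _ le_rfl⟩
      · rintro ⟨h1, h2⟩ i hi
        rcases Nat.lt_or_ge n i with h | h
        · obtain rfl : i = n + 1 := by omega
          exact h2
        · exact h1 i h
    rw [hset', ← Measure.map_apply (by fun_prop)
      ((measurableSet_singleton _).prod (measurableSet_singleton _)),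
      ← ProbabilityTheory.Kernel.partialTraj_compProd_eq_map_traj (Nat.zero_le n),
      Measure.compProd_apply_prod (measurableSet_singleton _) (measurableSet_singleton _),
      Measure.restrict_singleton, lintegral_smul_measure, lintegral_dirac,
      ← ProbabilityTheory.Kernel.traj_map_frestrictLe_apply,
      Measure.map_apply (Preorder.measurable_frestrictLe n) (measurableSet_singleton _), ← hset,
      ih, hκ, PMF.toMeasure_apply_singleton _ _ (measurableSet_singleton _),
      Finset.prod_range_succ, smul_eq_mul, mul_assoc]
    rfl

/-- A Markov chain with an arbitrary, possibly infinite, initial measure `w`. -/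
theorem exists_markov {A : Type} [Countable A] [MeasurableSpace A]
    [DiscreteMeasurableSpace A] (q : A → PMF A) (w : A → ℝ≥0∞) :
    ∃ M : Measure (ℕ → A), ∀ (n : ℕ) (x : ℕ → A),
      M {y | ∀ i ≤ n, y i = x i} =
        w (x 0) * ∏ i ∈ Finset.range n, q (x i) (x (i + 1)) := by
  choose M hM using markov_chain_from q
  refine ⟨Measure.sum fun a => w a • M a, fun n x => ?_⟩
  have hmeas : MeasurableSet {y : ℕ → A | ∀ i ≤ n, y i = x i} := by
    simp only [Set.ofPred_forall]
    exact MeasurableSet.iInter fun i => MeasurableSet.iInter fun _ =>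
      measurableSet_eq_fun (measurable_pi_apply i) measurable_const
  rw [Measure.sum_apply _ hmeas, tsum_eq_single (x 0)]
  · simp [hM]
  · intro a ha
    simp [hM, ha.symm]


/-! ### Cylinders, prepending an arrow, and measurability -/

variable (s r : A → V)

theorem measurableSet_coord (i : ℕ) (S : Set A) :
    MeasurableSet {p : PathSpace s r | p.seq i ∈ S} := by
  let : MeasurableSpace A := ⊤
  exact ⟨(fun x : ℕ → A => x i) ⁻¹' S, measurable_pi_apply i trivial, rfl⟩

theorem measurable_seq :
    @Measurable _ _ _ (@MeasurableSpace.pi ℕ (fun _ => A) (fun _ => ⊤))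
      (fun p : PathSpace s r => p.seq) :=
  fun S hS => ⟨S, hS, rfl⟩

theorem measurableSet_cylA (a : A) : MeasurableSet (cylA s r a) :=
  measurableSet_coord s r 0 {a}

theorem measurableSet_cylV (v : V) : MeasurableSet (cylV s r v) :=
  measurableSet_coord s r 0 {a | s a = v}

theorem measurable_shift : Measurable (shift s r) := by
  let : MeasurableSpace A := ⊤
  rintro _ ⟨S, hS, rfl⟩
  have h : Measurable (fun (x : ℕ → A) (i : ℕ) => x (i + 1)) := by fun_prop
  exact ⟨_, h hS, rfl⟩

/-- The set of infinite paths agreeing with the infinite path `p` in its first `n + 1` arrows. -/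
def cylN (n : ℕ) (p : PathSpace s r) : Set (PathSpace s r) :=
  {x | ∀ i ≤ n, x.seq i = p.seq i}

variable {s r}

theorem mem_cylN {n : ℕ} {p x : PathSpace s r} :
    x ∈ cylN s r n p ↔ ∀ i ≤ n, x.seq i = p.seq i := Iff.rfl

theorem mem_cylA {a : A} {x : PathSpace s r} : x ∈ cylA s r a ↔ x.seq 0 = a := Iff.rfl

theorem mem_cylV {v : V} {x : PathSpace s r} : x ∈ cylV s r v ↔ s (x.seq 0) = v := Iff.rfl

theorem self_mem_cylN (n : ℕ) (p : PathSpace s r) : p ∈ cylN s r n p := fun _ _ => rfl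

theorem cylN_zero (p : PathSpace s r) : cylN s r 0 p = cylA s r (p.seq 0) := by
  ext x
  simp [mem_cylN, mem_cylA]

@[ext]
theorem PathSpace.ext {p q : PathSpace s r} (h : p.seq = q.seq) : p = q := by
  cases p; cases q; cases h; rfl

variable (s r)

theorem countable_range_cylN [Countable A] (n : ℕ) : (Set.range (cylN s r n)).Countable := by
  refine (Set.countable_range fun f : Fin (n + 1) → A =>
    {x : PathSpace s r | ∀ i : Fin (n + 1), x.seq i = f i}).mono ?_
  rintro _ ⟨p, rfl⟩
  refine ⟨fun i => p.seq i, ?_⟩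
  ext x
  simp only [Set.mem_ofPred_eq, mem_cylN]
  exact ⟨fun h i hi => h ⟨i, by omega⟩, fun h i => h i (by omega)⟩

theorem measurableSet_cylN (n : ℕ) (p : PathSpace s r) : MeasurableSet (cylN s r n p) := by
  have : cylN s r n p = ⋂ i, ⋂ (_ : i ≤ n), {x : PathSpace s r | x.seq i ∈ ({p.seq i} : Set A)} := by
    ext x
    simp [mem_cylN]
  rw [this]
  exact MeasurableSet.iInter fun i => MeasurableSet.iInter fun _ => measurableSet_coord s r i _

theorem generateFrom_cylN [Countable A] :
    (inferInstance : MeasurableSpace (PathSpace s r)) =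
      MeasurableSpace.generateFrom {S | ∃ n p, S = cylN s r n p} := by
  apply le_antisymm
  · let : MeasurableSpace A := ⊤
    have : @Measurable _ _ (MeasurableSpace.generateFrom {S | ∃ n p, S = cylN s r n p}) _
        (fun p : PathSpace s r => p.seq) := by
      let := MeasurableSpace.generateFrom {S | ∃ n p, S = cylN s r n p}
      refine measurable_pi_iff.2 fun i => measurable_to_countable' fun a => ?_
      have hU : (fun p : PathSpace s r => p.seq i) ⁻¹' {a} =
          ⋃₀ {S | ∃ p : PathSpace s r, p.seq i = a ∧ S = cylN s r i p} := by
        ext x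
        simp only [Set.mem_preimage, Set.mem_singleton_iff, Set.mem_sUnion, Set.mem_ofPred_eq]
        constructor
        · exact fun h => ⟨_, ⟨x, h, rfl⟩, self_mem_cylN i x⟩
        · rintro ⟨_, ⟨p, hp, rfl⟩, hx⟩
          rw [hx i le_rfl, hp]
      rw [hU]
      refine MeasurableSet.sUnion ((countable_range_cylN s r i).mono ?_) ?_
      · rintro _ ⟨p, -, rfl⟩
        exact ⟨p, rfl⟩
      · rintro _ ⟨p, -, rfl⟩
        exact MeasurableSpace.measurableSet_generateFrom ⟨i, p, rfl⟩
    exact this.comap_le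
  · refine MeasurableSpace.generateFrom_le ?_
    rintro _ ⟨n, p, rfl⟩
    exact measurableSet_cylN s r n p

variable {s r}

/-- The cylinders `cylN` are a generating π-system, and those with `n = 0` are a countable cover. -/
theorem measure_ext_cylN [Countable A] {μ ν : Measure (PathSpace s r)}
    (hfin : ∀ p, μ (cylN s r 0 p) ≠ ∞) (h : ∀ n p, μ (cylN s r n p) = ν (cylN s r n p)) :
    μ = ν := by
  refine Measure.ext_of_generateFrom_of_cover_subset (T := Set.range (cylN s r 0))
    (generateFrom_cylN s r) ?_ ?_ (countable_range_cylN s r 0) ?_ ?_ ?_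
  · rintro _ ⟨n, p, rfl⟩ _ ⟨k, q, rfl⟩ ⟨x, hx1, hx2⟩
    refine ⟨max n k, x, ?_⟩
    ext y
    simp only [Set.mem_inter_iff, mem_cylN] at *
    constructor
    · rintro ⟨h1, h2⟩ i hi
      rcases le_max_iff.1 hi with hi | hi
      · rw [h1 i hi, hx1 i hi]
      · rw [h2 i hi, hx2 i hi]
    · intro h
      exact ⟨fun i hi => (h i (le_max_of_le_left hi)).trans (hx1 i hi),
        fun i hi => (h i (le_max_of_le_right hi)).trans (hx2 i hi)⟩
  · rintro _ ⟨p, rfl⟩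
    exact ⟨0, p, rfl⟩
  · exact Set.eq_univ_of_forall fun x => ⟨_, ⟨x, rfl⟩, self_mem_cylN 0 x⟩
  · rintro _ ⟨p, rfl⟩
    exact hfin p
  · rintro _ ⟨n, p, rfl⟩
    exact h n p

/-- The infinite path `a p` obtained by prepending an arrow. -/
def consPath (a : A) (p : PathSpace s r) (h : s (p.seq 0) = r a) : PathSpace s r where
  seq i := Nat.casesOn i a p.seq
  compat i := by
    cases i with
    | zero => exact h.symm
    | succ i => exact p.compat i

theorem shift_image_cylA (a : A) (C : Set (PathSpace s r)) :
    shift s r '' (shift s r ⁻¹' C ∩ cylA s r a) = C ∩ cylV s r (r a) := by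
  ext x
  constructor
  · rintro ⟨y, ⟨hy, hya⟩, rfl⟩
    refine ⟨hy, ?_⟩
    rw [mem_cylA] at hya
    rw [mem_cylV, ← hya]
    exact (y.compat 0).symm
  · rintro ⟨hx, hxv⟩
    exact ⟨consPath a x hxv, ⟨hx, rfl⟩, rfl⟩

theorem shift_injOn_cylA (a : A) : Set.InjOn (shift s r) (cylA s r a) := by
  intro x hx y hy h
  ext i
  cases i with
  | zero => exact (mem_cylA.1 hx).trans (mem_cylA.1 hy).symm
  | succ i => exact congrFun (congrArg PathSpace.seq h) i

theorem measurableSet_shift_image (a : A) {B : Set (PathSpace s r)} (hB : MeasurableSet B) :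
    MeasurableSet (shift s r '' (B ∩ cylA s r a)) := by
  let : MeasurableSpace A := ⊤
  obtain ⟨S, hS, rfl⟩ := hB
  have h : Measurable (fun (x : ℕ → A) (i : ℕ) => (Nat.casesOn i a x : A)) := by
    refine measurable_pi_lambda _ fun i => ?_
    cases i with
    | zero => exact measurable_const
    | succ i => exact measurable_pi_apply i
  have heq : shift s r '' ((fun p : PathSpace s r => p.seq) ⁻¹' S ∩ cylA s r a) =
      (fun p : PathSpace s r => p.seq) ⁻¹' ((fun (x : ℕ → A) (i : ℕ) =>
        (Nat.casesOn i a x : A)) ⁻¹' S) ∩ cylV s r (r a) := by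
    ext x
    constructor
    · rintro ⟨y, ⟨hy, hya⟩, rfl⟩
      rw [mem_cylA] at hya
      subst hya
      refine ⟨?_, (y.compat 0).symm⟩
      have : (fun i : ℕ => (Nat.casesOn i (y.seq 0) (shift s r y).seq : A)) = y.seq := by
        funext i
        cases i <;> rfl
      change (fun i : ℕ => (Nat.casesOn i (y.seq 0) (shift s r y).seq : A)) ∈ S
      rw [this]
      exact hy
    · rintro ⟨hx, hxv⟩
      exact ⟨consPath a x hxv, ⟨hx, rfl⟩, rfl⟩
  rw [heq]
  exact (measurable_seq s r (h hS)).inter (measurableSet_cylV s r _)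

/-! ### Conformal measures and their values on cylinders -/

/-- The weight `e^{-βF(a)}` of an arrow. -/
noncomputable def arrowWt (F : A → ℝ) (β : ℝ) (a : A) : ℝ≥0∞ :=
  ENNReal.ofReal (Real.exp (-(β * F a)))

theorem arrowWt_ne_top (F : A → ℝ) (β : ℝ) (a : A) : arrowWt F β a ≠ ∞ := ENNReal.ofReal_ne_top

theorem exp_mul_arrowWt (F : A → ℝ) (β : ℝ) (a : A) :
    ENNReal.ofReal (Real.exp (β * F a)) * arrowWt F β a = 1 := by
  rw [arrowWt, ← ENNReal.ofReal_mul (Real.exp_nonneg _), ← Real.exp_add]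
  simp

/-- Conformality rephrased through preimages: on `Z(a)` the shift is injective with image
`Z(r(a))`, and `m (Z(a) ∩ σ⁻¹ C) = e^{-βF(a)} m (C ∩ Z(r(a)))`. In this form both sides are
measures in `C`. -/
theorem scaling_iff (F : A → ℝ) (β : ℝ) (m : Measure (PathSpace s r)) :
    (∀ (a : A) (B : Set (PathSpace s r)), MeasurableSet B →
      m (shift s r '' (B ∩ cylA s r a)) =
        ENNReal.ofReal (Real.exp (β * F a)) * m (B ∩ cylA s r a)) ↔
    ∀ (a : A) (C : Set (PathSpace s r)), MeasurableSet C →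
      m (shift s r ⁻¹' C ∩ cylA s r a) = arrowWt F β a * m (C ∩ cylV s r (r a)) := by
  constructor
  · intro h a C hC
    rw [← shift_image_cylA, h a _ (measurable_shift s r hC), ← mul_assoc, mul_comm (arrowWt F β a),
      exp_mul_arrowWt, one_mul]
  · intro h a B hB
    have h1 : shift s r ⁻¹' (shift s r '' (B ∩ cylA s r a)) ∩ cylA s r a = B ∩ cylA s r a := by
      ext x
      constructor
      · rintro ⟨⟨y, hy, hyx⟩, hx⟩
        rwa [← shift_injOn_cylA a hy.2 hx hyx]
      · exact fun hx => ⟨⟨x, hx, rfl⟩, hx.2⟩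
    have h2 : shift s r '' (B ∩ cylA s r a) ∩ cylV s r (r a) = shift s r '' (B ∩ cylA s r a) := by
      refine Set.inter_eq_left.2 ?_
      rintro _ ⟨y, ⟨-, hy⟩, rfl⟩
      rw [mem_cylA] at hy
      rw [mem_cylV, ← hy]
      exact (y.compat 0).symm
    have := h a _ (measurableSet_shift_image a hB)
    rw [h1, h2] at this
    rw [this, ← mul_assoc, exp_mul_arrowWt, one_mul]

theorem measure_cylV [Countable A] (m : Measure (PathSpace s r)) (v : V) :
    m (cylV s r v) = ∑' a : {a : A // s a = v}, m (cylA s r a) := by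
  have : cylV s r v = ⋃ a : {a : A // s a = v}, cylA s r a := by
    ext x
    simp [mem_cylV, mem_cylA]
  rw [this]
  refine measure_iUnion ?_ fun a => measurableSet_cylA s r a
  intro a b hab
  refine Set.disjoint_left.2 fun x hx hx' => hab (Subtype.ext ?_)
  exact (mem_cylA.1 hx).symm.trans (mem_cylA.1 hx')

/-- Harmonicity written as a sum over the arrows leaving `v` instead of over their ranges. -/
theorem tsum_Amat_mul (F : A → ℝ) (β : ℝ) (ψ : V → ℝ≥0∞) (v : V) :
    ∑' w, Amat s r F β v w * ψ w = ∑' a : {a : A // s a = v}, arrowWt F β a * ψ (r a) := by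
  classical
  have h1 : ∀ w, Amat s r F β v w * ψ w =
      ∑' a : A, if r a = w then (if s a = v then arrowWt F β a * ψ (r a) else 0) else 0 := by
    intro w
    rw [Amat, ← ENNReal.tsum_mul_right]
    refine (tsum_subtype {a : A | s a = v ∧ r a = w} fun a => arrowWt F β a * ψ w).trans ?_
    refine tsum_congr fun a => ?_
    by_cases h : r a = w
    · subst h
      simp [Set.indicator]
    · simp [Set.indicator, h]
  simp_rw [h1]
  rw [ENNReal.tsum_comm]
  refine Eq.trans (tsum_congr fun a => ?_)
    (tsum_subtype {a : A | s a = v} fun a => arrowWt F β a * ψ (r a)).symm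
  rw [tsum_eq_single (r a) fun w hw => if_neg hw.symm]
  simp [Set.indicator]

theorem Conformal.measure_cylA {F : A → ℝ} {β : ℝ} {m : Measure (PathSpace s r)}
    (hm : Conformal s r F β m) (a : A) :
    m (cylA s r a) = arrowWt F β a * m (cylV s r (r a)) := by
  simpa using (scaling_iff F β m).1 hm.2.2 a Set.univ MeasurableSet.univ

theorem Conformal.isHarmonic [Countable V] [Countable A] {F : A → ℝ} {β : ℝ}
    {m : Measure (PathSpace s r)} (hm : Conformal s r F β m) :
    IsHarmonic (Amat s r F β) fun v => m (cylV s r v) := by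
  refine ⟨fun h => hm.1 ?_, hm.2.1, fun v => ?_⟩
  · rw [← Measure.measure_univ_eq_zero]
    have hU : (Set.univ : Set (PathSpace s r)) = ⋃ v, cylV s r v := by
      ext x
      simp [mem_cylV]
    rw [hU, measure_iUnion_null_iff]
    exact fun v => congrFun h v
  · rw [tsum_Amat_mul]
    refine Eq.trans ?_ (measure_cylV m v).symm
    exact tsum_congr fun a => (hm.measure_cylA a).symm

theorem shift_preimage_cylN (n : ℕ) (p : PathSpace s r) :
    shift s r ⁻¹' cylN s r n (shift s r p) ∩ cylA s r (p.seq 0) = cylN s r (n + 1) p := by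
  ext x
  constructor
  · rintro ⟨h, h0⟩ i hi
    cases i with
    | zero => exact h0
    | succ i => exact h i (by omega)
  · exact fun h => ⟨fun i hi => h (i + 1) (by omega), h 0 (by omega)⟩

theorem cylN_subset_cylV (n : ℕ) (p : PathSpace s r) : cylN s r n p ⊆ cylV s r (s (p.seq 0)) :=
  fun _ hx => congrArg s (hx 0 (Nat.zero_le n))

theorem Conformal.eq_of_cylV [Countable A] {F : A → ℝ} {β : ℝ}
    {m m' : Measure (PathSpace s r)} (hm : Conformal s r F β m) (hm' : Conformal s r F β m')
    (h : ∀ v, m (cylV s r v) = m' (cylV s r v)) : m = m' := by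
  refine measure_ext_cylN (fun p => ?_) fun n => ?_
  · exact ne_top_of_le_ne_top (hm.2.1 _) (measure_mono (cylN_subset_cylV 0 p))
  · induction n with
    | zero =>
      intro p
      rw [cylN_zero, hm.measure_cylA, hm'.measure_cylA, h]
    | succ n ih =>
      intro p
      have hV : cylN s r n (shift s r p) ∩ cylV s r (r (p.seq 0)) = cylN s r n (shift s r p) := by
        rw [Set.inter_eq_left, p.compat 0]
        exact cylN_subset_cylV n (shift s r p)
      rw [← shift_preimage_cylN, (scaling_iff F β m).1 hm.2.2 _ _ (measurableSet_cylN s r _ _),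
        (scaling_iff F β m').1 hm'.2.2 _ _ (measurableSet_cylN s r _ _), hV, ih]

/-- Induction on the length of `μ`, since `Z(aμ) = Z(a) ∩ σ⁻¹ Z(μ)`. -/
theorem Conformal.measure_finCyl {F : A → ℝ} {β : ℝ} {m : Measure (PathSpace s r)}
    (hm : Conformal s r F β m) (μ : FinPath s r) :
    m (finCyl s r μ) =
      ENNReal.ofReal (Real.exp (-(β * finWt s r F μ))) * m (cylV s r (finRng s r μ)) := by
  obtain ⟨v, l, h1, h2⟩ := μ
  induction l generalizing v with
  | nil =>
    have : finCyl s r ⟨v, [], h1, h2⟩ = cylV s r v := by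
      ext x
      simp [finCyl, mem_cylV]
    simp [this, finWt, finRng]
  | cons a l ih =>
    have h1' : ∀ h : l ≠ [], s (l.head h) = r a := by
      intro h
      cases l with
      | nil => exact absurd rfl h
      | cons b l => exact (List.isChain_cons_cons.1 h2).1.symm
    have h2' : l.Chain' (fun a b => r a = s b) := h2.tail
    have hav : s a = v := h1 (by simp)
    have hset : finCyl s r ⟨v, a :: l, h1, h2⟩ =
        shift s r ⁻¹' (finCyl s r ⟨r a, l, h1', h2'⟩) ∩ cylA s r a := by
      ext x
      constructor
      · rintro ⟨hs, hx⟩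
        have h0 : x.seq 0 = a := hx ⟨0, by simp⟩
        refine ⟨⟨?_, fun i => hx ⟨i.1 + 1, by simp⟩⟩, h0⟩
        change s (x.seq 1) = r a
        rw [← h0]
        exact (x.compat 0).symm
      · rintro ⟨⟨hs, hx⟩, h0⟩
        rw [mem_cylA] at h0
        refine ⟨by rw [h0]; exact hav, fun i => ?_⟩
        obtain ⟨i, hi⟩ := i
        cases i with
        | zero => exact h0
        | succ i => exact hx ⟨i, by simpa using hi⟩
    have hmeas : MeasurableSet (finCyl s r ⟨r a, l, h1', h2'⟩) := by
      have : finCyl s r ⟨r a, l, h1', h2'⟩ = cylV s r (r a) ∩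
          ⋂ i : Fin l.length, {p : PathSpace s r | p.seq i.1 ∈ ({l.get i} : Set A)} := by
        ext x
        simp [finCyl, mem_cylV]
      rw [this]
      exact (measurableSet_cylV s r _).inter
        (MeasurableSet.iInter fun i => measurableSet_coord s r _ _)
    have hsub : finCyl s r ⟨r a, l, h1', h2'⟩ ∩ cylV s r (r a) =
        finCyl s r ⟨r a, l, h1', h2'⟩ :=
      Set.inter_eq_left.2 fun x hx => hx.1
    have hrng : finRng s r ⟨v, a :: l, h1, h2⟩ = finRng s r ⟨r a, l, h1', h2'⟩ := by
      cases l with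
      | nil => simp [finRng]
      | cons b l => simp [finRng, List.getLast?_eq_some_getLast]
    have hwt : ENNReal.ofReal (Real.exp (-(β * finWt s r F ⟨v, a :: l, h1, h2⟩))) =
        arrowWt F β a * ENNReal.ofReal (Real.exp (-(β * finWt s r F ⟨r a, l, h1', h2'⟩))) := by
      rw [arrowWt, ← ENNReal.ofReal_mul (Real.exp_nonneg _), ← Real.exp_add]
      simp only [finWt, List.map_cons, List.sum_cons]
      ring_nf
    rw [hset, (scaling_iff F β m).1 hm.2.2 a _ hmeas, hsub, ih, hrng, hwt, mul_assoc]

/-! ### The conformal measure of a harmonic vector -/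

/-- One step of the Markov chain attached to a harmonic vector: after the arrow `a`, the next arrow
is `b` with probability `e(b) ψ(r(b)) / ψ(r(a))` if `s(b) = r(a)` and `0` otherwise. The identity is
multiplied by `ψ(r(a))` so that it also holds when `ψ(r(a)) = 0`, where the law is immaterial. -/
theorem exists_transition {e : A → ℝ≥0∞} {ψ : V → ℝ≥0∞} (hfin : ∀ v, ψ v ≠ ∞)
    (hψ : ∀ v, ∑' a : {a : A // s a = v}, e a * ψ (r a) = ψ v) (a : A) :
    ∃ q : PMF A, ∀ b, ψ (r a) * q b =
      {b | s b = r a}.indicator (fun b => e b * ψ (r b)) b := by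
  have hsum : ∑' b, {b | s b = r a}.indicator (fun b => e b * ψ (r b)) b = ψ (r a) :=
    (tsum_subtype {b | s b = r a} fun b => e b * ψ (r b)).symm.trans (hψ (r a))
  by_cases h : ψ (r a) = 0
  · refine ⟨PMF.pure a, fun b => ?_⟩
    rw [h, ENNReal.tsum_eq_zero] at hsum
    rw [hsum, h, zero_mul]
  · refine ⟨PMF.normalize ({b | s b = r a}.indicator (fun b => e b * ψ (r b)))
      (hsum.trans_ne h) (hsum.trans_ne (hfin _)), fun b => ?_⟩
    rw [PMF.normalize_apply, hsum, mul_comm, mul_assoc, ENNReal.inv_mul_cancel h (hfin _), mul_one]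

/-- The path measure of the Markov chain of `exists_transition` with initial weights `e(a) ψ(r(a))`.
The values on `Z(a)` are listed separately because `cylN` only covers the nonempty cylinders. -/
theorem exists_measure [Countable A] {e : A → ℝ≥0∞} {ψ : V → ℝ≥0∞}
    (hfin : ∀ v, ψ v ≠ ∞) (hψ : ∀ v, ∑' a : {a : A // s a = v}, e a * ψ (r a) = ψ v) :
    ∃ m : Measure (PathSpace s r),
      (∀ a, m (cylA s r a) = e a * ψ (r a)) ∧
      ∀ n p, m (cylN s r n p) = (∏ i ∈ Finset.range (n + 1), e (p.seq i)) * ψ (r (p.seq n)) := by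
  classical
  let : MeasurableSpace A := ⊤
  choose q hq using exists_transition (s := s) (r := r) (e := e) hfin hψ
  obtain ⟨M, hM⟩ := exists_markov q fun a => e a * ψ (r a)
  -- The mass of a cylinder over a word that is not a path vanishes.
  have hM' : ∀ (n : ℕ) (x : ℕ → A), M {y | ∀ i ≤ n, y i = x i} =
      if ∀ i < n, r (x i) = s (x (i + 1)) then
        (∏ i ∈ Finset.range (n + 1), e (x i)) * ψ (r (x n)) else 0 := by
    intro n x
    rw [hM]
    induction n with
    | zero => simp
    | succ n ih =>
      rw [Finset.prod_range_succ, ← mul_assoc, ih]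
      by_cases h : ∀ i < n, r (x i) = s (x (i + 1))
      · rw [if_pos h, mul_assoc, hq]
        by_cases h' : r (x n) = s (x (n + 1))
        · have : ∀ i < n + 1, r (x i) = s (x (i + 1)) := by
            intro i hi
            rcases Nat.lt_succ_iff_lt_or_eq.1 hi with hi | rfl
            exacts [h i hi, h']
          rw [if_pos this, Set.indicator_of_mem (by exact h'.symm),
            Finset.prod_range_succ _ (n + 1), mul_assoc]
        · rw [if_neg fun hc => h' (hc n n.lt_succ_self),
            Set.indicator_of_notMem (by exact fun hc => h' hc.symm), mul_zero]
      · rw [if_neg h, if_neg fun hc => h fun i hi => hc i (by omega), zero_mul]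
  let P : Set (ℕ → A) := {x | ∀ i, r (x i) = s (x (i + 1))}
  have hP : MeasurableSet P := by
    have : P = ⋂ i, (fun x : ℕ → A => (x i, x (i + 1))) ⁻¹' {ab | r ab.1 = s ab.2} := by
      ext x
      simp [P]
    rw [this]
    exact MeasurableSet.iInter fun i =>
      (by fun_prop : Measurable fun x : ℕ → A => (x i, x (i + 1))) (MeasurableSet.of_discrete)
  have hnull : M Pᶜ = 0 := by
    have hsub : Pᶜ ⊆ ⋃ i : ℕ, ⋃ f : {f : Fin (i + 2) → A //
        ∃ x : ℕ → A, (∀ j, f j = x j) ∧ r (x i) ≠ s (x (i + 1))},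
        {y : ℕ → A | ∀ j : Fin (i + 2), y j = f.1 j} := by
      intro y hy
      obtain ⟨i, hi⟩ : ∃ i, r (y i) ≠ s (y (i + 1)) := by simpa [P] using hy
      simp only [Set.mem_iUnion]
      exact ⟨i, ⟨fun j => y j, y, fun _ => rfl, hi⟩, fun _ => rfl⟩
    refine measure_mono_null hsub ?_
    rw [measure_iUnion_null_iff]
    intro i
    rw [measure_iUnion_null_iff]
    rintro ⟨f, x, hfx, hx⟩
    have : {y : ℕ → A | ∀ j : Fin (i + 2), y j = f j} = {y | ∀ j ≤ i + 1, y j = x j} := by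
      ext y
      simp only [Set.mem_ofPred_eq, hfx]
      exact ⟨fun h j hj => h ⟨j, by omega⟩, fun h j => h j (by omega)⟩
    change M {y : ℕ → A | ∀ j : Fin (i + 2), y j = f j} = 0
    rw [this, hM', if_neg fun hc => hx (hc i i.lt_succ_self)]
  have himage : ∀ S : Set (ℕ → A),
      (fun p : PathSpace s r => p.seq) '' ((fun p : PathSpace s r => p.seq) ⁻¹' S) = S ∩ P := by
    intro S
    ext x
    constructor
    · rintro ⟨p, hp, rfl⟩
      exact ⟨hp, p.compat⟩
    · rintro ⟨hx, hxP⟩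
      exact ⟨⟨x, hxP⟩, hx, rfl⟩
  have hinj : Function.Injective (fun p : PathSpace s r => p.seq) := fun _ _ h => PathSpace.ext h
  have hcomap : ∀ S : Set (ℕ → A), MeasurableSet S →
      M.comap (fun p : PathSpace s r => p.seq) ((fun p : PathSpace s r => p.seq) ⁻¹' S) = M S := by
    intro S hS
    have hSm : MeasurableSet ((fun p : PathSpace s r => p.seq) ⁻¹' S) := measurable_seq s r hS
    rw [Measure.comap_apply _ hinj _ _ hSm, himage, measure_inter_conull hnull]
    rintro _ ⟨T, hT, rfl⟩
    rw [himage]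
    exact hT.inter hP
  have hmeas : ∀ (n : ℕ) (x : ℕ → A), MeasurableSet {y : ℕ → A | ∀ i ≤ n, y i = x i} := by
    intro n x
    simp only [Set.ofPred_forall]
    exact MeasurableSet.iInter fun i => MeasurableSet.iInter fun _ =>
      measurableSet_eq_fun (measurable_pi_apply i) measurable_const
  refine ⟨M.comap fun p => p.seq, fun a => ?_, fun n p => ?_⟩
  · have : cylA s r a = (fun p : PathSpace s r => p.seq) ⁻¹' {y | ∀ i ≤ 0, y i = a} := by
      ext x
      simp [mem_cylA]
    rw [this, hcomap _ (hmeas 0 fun _ => a), hM' 0 fun _ => a]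
    simp
  · have : cylN s r n p = (fun p : PathSpace s r => p.seq) ⁻¹' {y | ∀ i ≤ n, y i = p.seq i} := rfl
    rw [this, hcomap _ (hmeas n p.seq), hM', if_pos fun i _ => p.compat i]

theorem exists_conformal [Countable A] {F : A → ℝ} {β : ℝ} {ψ : V → ℝ≥0∞}
    (hψ : IsHarmonic (Amat s r F β) ψ) :
    ∃ m : Measure (PathSpace s r), Conformal s r F β m ∧ ∀ v, m (cylV s r v) = ψ v := by
  obtain ⟨hne, hfin, hharm⟩ := hψ
  simp only [tsum_Amat_mul] at hharm
  obtain ⟨m, hA, hN⟩ := exists_measure (r := r) hfin hharm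
  have hV : ∀ v, m (cylV s r v) = ψ v := fun v => by simp only [measure_cylV, hA, hharm]
  refine ⟨m, ⟨?_, fun v => by rw [hV]; exact hfin v, (scaling_iff F β m).2 fun a C hC => ?_⟩, hV⟩
  · rintro rfl
    exact hne (funext fun v => (hV v).symm)
  -- Both sides, as functions of `C`, are finite measures; it suffices to compare cylinders.
  have key : (m.restrict (cylA s r a)).map (shift s r) =
      arrowWt F β a • m.restrict (cylV s r (r a)) := by
    have happ : ∀ C, MeasurableSet C → (m.restrict (cylA s r a)).map (shift s r) C =
        m (shift s r ⁻¹' C ∩ cylA s r a) := fun C hC => by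
      rw [Measure.map_apply (measurable_shift s r) hC,
        Measure.restrict_apply (measurable_shift s r hC)]
    refine measure_ext_cylN (fun p => ?_) fun n p => ?_
    · rw [happ _ (measurableSet_cylN s r 0 p)]
      refine ne_top_of_le_ne_top ?_ (measure_mono Set.inter_subset_right)
      rw [hA]
      exact ENNReal.mul_ne_top (arrowWt_ne_top F β a) (hfin _)
    · rw [happ _ (measurableSet_cylN s r n p), Measure.smul_apply,
        Measure.restrict_apply (measurableSet_cylN s r n p), smul_eq_mul]
      by_cases h : s (p.seq 0) = r a
      · have h1 : shift s r ⁻¹' cylN s r n p ∩ cylA s r a = cylN s r (n + 1) (consPath a p h) :=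
          shift_preimage_cylN n (consPath a p h)
        have h2 : cylN s r n p ∩ cylV s r (r a) = cylN s r n p := by
          rw [Set.inter_eq_left, ← h]
          exact cylN_subset_cylV n p
        rw [h1, h2, hN, hN, Finset.prod_range_succ', ← mul_assoc, mul_comm (arrowWt F β a)]
        rfl
      · have h2 : cylN s r n p ∩ cylV s r (r a) = ∅ := by
          refine Set.eq_empty_of_forall_notMem fun x hx => h ?_
          rw [← mem_cylV.1 hx.2]
          exact (cylN_subset_cylV n p hx.1).symm
        have h1 : shift s r ⁻¹' cylN s r n p ∩ cylA s r a = ∅ := by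
          rw [← Set.image_eq_empty (f := shift s r), shift_image_cylA, h2]
        rw [h1, h2, measure_empty, mul_zero]
  have := congrArg (fun μ => μ C) key
  simpa [Measure.map_apply (measurable_shift s r) hC, Measure.restrict_apply hC,
    Measure.restrict_apply (measurable_shift s r hC)] using this

/-- the map `m ↦ (m(Z(v)))_v` is a bijection from the `e^{βF}`-conformal
measures onto the `A(β)`-harmonic vectors, and the conformal measure corresponding to a
harmonic vector `ψ` is the unique one with `m(Z(μ)) = e^{-βF(μ)} ψ_{r(μ)}` for all finite
paths `μ`. -/
theorem statement0 {V A : Type} [Countable V] [Countable A] (s r : A → V)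
    (F : A → ℝ) (β : ℝ) :
    Set.BijOn (fun (m : Measure (PathSpace s r)) (v : V) => m (cylV s r v))
      {m : Measure (PathSpace s r) | Conformal s r F β m}
      {ψ : V → ℝ≥0∞ | IsHarmonic (Amat s r F β) ψ} ∧
    ∀ ψ : V → ℝ≥0∞, IsHarmonic (Amat s r F β) ψ →
      ∃! m : Measure (PathSpace s r), Conformal s r F β m ∧
        ∀ μ : FinPath s r, m (finCyl s r μ) =
          ENNReal.ofReal (Real.exp (-(β * finWt s r F μ))) * ψ (finRng s r μ) := by
  refine ⟨⟨fun m hm => hm.isHarmonic, fun m hm m' hm' h => ?_, fun ψ hψ => ?_⟩, fun ψ hψ => ?_⟩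
  · exact Conformal.eq_of_cylV hm hm' fun v => congrFun h v
  · obtain ⟨m, hm, hV⟩ := exists_conformal hψ
    exact ⟨m, hm, funext hV⟩
  · obtain ⟨m, hm, hV⟩ := exists_conformal hψ
    refine ⟨m, ⟨hm, fun μ => by rw [hm.measure_finCyl, hV]⟩, ?_⟩
    rintro m' ⟨hm', hμ⟩
    refine hm'.eq_of_cylV hm fun v => ?_
    -- A vertex is a path of length `0`, so the formula determines `m' (Z(v))`.
    have h := hμ ⟨v, [], fun h => absurd rfl h, List.isChain_nil⟩
    rw [hm'.measure_finCyl] at h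
    rw [hV]
    simpa [finWt, finRng] using h

end GraphKMS
end

section
/- Let Γ be a countable directed graph, F a potential and β ∈ ℝ. Assume Σ_{n=0}^∞ A(β)^n_{v,w} < ∞ for all v, w ∈ Γ_V. Then every e^{βF}-conformal measure m on P(Γ) is concentrated on the set Wan(Γ) of wandering paths, i.e. m(P(Γ) \ Wan(Γ)) = 0. -/
/-!
Write `E n v w` (`visitSet`) for the set of paths that start at `v` and are at `w` after `n` steps. Splitting
such a path after its first arrow and using conformality on that arrow gives, by induction,
`m (E n v w) ≤ A(β)ⁿ_{v,w} m(Z(w))` (`measure_visit_le`). Since the Green function and `m(Z(w))`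
are finite, `Σₙ m (E n v w) < ∞`, so by the Borel–Cantelli lemma almost no path from `v` visits
`w` infinitely often. A path that is not wandering visits some finite set of vertices, hence some
single vertex, infinitely often; there are countably many pairs `(v, w)`, which finishes the proof.
-/

open MeasureTheory Filter Topology
open scoped ENNReal NNReal

namespace GraphKMS

variable {V A : Type}

/-- The set of paths that start at `v` and whose vertex after `n` arrows is `w`. -/
def visitSet (s r : A → V) (n : ℕ) (v w : V) : Set (PathSpace s r) :=
  {p | s (p.seq 0) = v ∧ s (p.seq n) = w}

lemma measurableSet_visit (s r : A → V) (n : ℕ) (w : V) :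
    MeasurableSet {p : PathSpace s r | s (p.seq n) = w} := by
  let _ : MeasurableSpace A := ⊤
  refine ⟨{x : ℕ → A | s (x n) = w}, ?_, rfl⟩
  have h : Measurable fun x : ℕ → A => x n := measurable_pi_apply n
  exact h (t := {a : A | s a = w}) trivial

/-- Conformality on the first arrow `a`, in the form that feeds the induction on the length. -/
lemma measure_visit_cylA_le (s r : A → V) (F : A → ℝ) (β : ℝ) (m : Measure (PathSpace s r))
    (hm : Conformal s r F β m) (n : ℕ) (w : V) (a : A) :
    m ({p | s (p.seq (n + 1)) = w} ∩ cylA s r a) ≤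
      ENNReal.ofReal (Real.exp (-(β * F a))) * m (visitSet s r n (r a) w) := by
  have h := hm.2.2 a _ (measurableSet_visit s r (n + 1) w)
  have hsub : shift s r '' ({p | s (p.seq (n + 1)) = w} ∩ cylA s r a) ⊆
      visitSet s r n (r a) w := by
    rintro _ ⟨p, ⟨hp, rfl⟩, rfl⟩
    exact ⟨(p.compat 0).symm, hp⟩
  calc m ({p | s (p.seq (n + 1)) = w} ∩ cylA s r a)
      = ENNReal.ofReal (Real.exp (-(β * F a))) * (ENNReal.ofReal (Real.exp (β * F a)) *
          m ({p | s (p.seq (n + 1)) = w} ∩ cylA s r a)) := by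
        rw [← mul_assoc, ← ENNReal.ofReal_mul (Real.exp_nonneg _), ← Real.exp_add]
        simp
    _ ≤ _ := by
        rw [← h]
        gcongr

lemma measure_visit_le [Countable V] [Countable A] (s r : A → V) (F : A → ℝ) (β : ℝ)
    (m : Measure (PathSpace s r)) (hm : Conformal s r F β m) (n : ℕ) (v w : V) :
    m (visitSet s r n v w) ≤ Apow s r F β n v w * m (cylV s r w) := by
  induction n generalizing v with
  | zero =>
    by_cases hvw : w = v
    · subst hvw
      simp only [Apow, matPow, Set.indicator_of_mem (Set.mem_singleton w), one_mul]
      exact measure_mono fun p hp => hp.1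
    · have : visitSet s r 0 v w = ∅ := by
        ext p
        simp only [visitSet, Set.mem_ofPred_eq, Set.mem_empty_iff_false, iff_false, not_and]
        exact fun h1 h2 => hvw (h2.symm.trans h1)
      simp [this]
  | succ n ih =>
    have hcover : visitSet s r (n + 1) v w ⊆
        ⋃ u : V, ⋃ a : {a : A // s a = v ∧ r a = u},
          ({p | s (p.seq (n + 1)) = w} ∩ cylA s r a.1) := by
      rintro p ⟨h0, h1⟩
      simp only [Set.mem_iUnion]
      exact ⟨r (p.seq 0), ⟨p.seq 0, h0, rfl⟩, h1, rfl⟩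
    calc m (visitSet s r (n + 1) v w)
        ≤ ∑' u : V, ∑' a : {a : A // s a = v ∧ r a = u},
            m ({p | s (p.seq (n + 1)) = w} ∩ cylA s r a.1) :=
          (measure_mono hcover).trans ((measure_iUnion_le _).trans
            (ENNReal.tsum_le_tsum fun u => measure_iUnion_le _))
      _ ≤ ∑' u : V, ∑' a : {a : A // s a = v ∧ r a = u},
            ENNReal.ofReal (Real.exp (-(β * F a.1))) *
              (Apow s r F β n u w * m (cylV s r w)) := by
          refine ENNReal.tsum_le_tsum fun u => ENNReal.tsum_le_tsum fun a => ?_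
          refine (measure_visit_cylA_le s r F β m hm n w a.1).trans ?_
          rw [a.2.2]
          exact mul_le_mul_right (ih u) _
      _ = Apow s r F β (n + 1) v w * m (cylV s r w) := by
          simp only [ENNReal.tsum_mul_right, Apow, matPow, ← mul_assoc]
          rfl

/-- every `e^{βF}`-conformal measure is concentrated on the wandering paths
when `Σₙ A(β)ⁿ_{v,w} < ∞` for all `v, w`. -/
theorem statement2 {V A : Type} [Countable V] [Countable A] (s r : A → V)
    (F : A → ℝ) (β : ℝ) (htrans : ∀ v w : V, Green s r F β v w ≠ ∞)
    (m : Measure (PathSpace s r)) (hm : Conformal s r F β m) :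
    m {p : PathSpace s r | ¬ Wandering s r p} = 0 := by
  have hnull : ∀ v w : V, m {p | ∃ᶠ n in atTop, p ∈ visitSet s r n v w} = 0 := by
    intro v w
    refine measure_setOfPred_frequently_eq_zero (ne_top_of_le_ne_top ?_
      (ENNReal.tsum_le_tsum fun n => measure_visit_le s r F β m hm n v w))
    rw [ENNReal.tsum_mul_right]
    exact ENNReal.mul_ne_top (htrans v w) (hm.2.1 w)
  refine measure_mono_null (t := ⋃ v : V, ⋃ w : V, {p | ∃ᶠ n in atTop, p ∈ visitSet s r n v w})
    ?_ (measure_iUnion_null fun v => measure_iUnion_null fun w => hnull v w)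
  intro p hp
  by_contra hcon
  refine hp fun F₀ => ?_
  have hev : ∀ w ∈ F₀, ∀ᶠ n in atTop, s (p.seq n) ≠ w := by
    intro w _
    by_contra h
    refine hcon (Set.mem_iUnion.2 ⟨s (p.seq 0), Set.mem_iUnion.2 ⟨w, ?_⟩⟩)
    exact (not_eventually.1 h).mono fun n hn => ⟨rfl, not_not.1 hn⟩
  obtain ⟨N, hN⟩ := eventually_atTop.1 ((Filter.eventually_all_finset F₀).2 hev)
  exact ⟨N, fun i hi hmem => hN i hi _ hmem rfl⟩

end GraphKMS
end

section
/- Let Γ be a countable directed graph, F a potential and β ∈ ℝ, and assume there is a vertex v₀ with 0 < Σ_{n=0}^∞ A(β)^n_{v₀,v} < ∞ for all v ∈ Γ_V. Let m be an extremal e^{βF}-conformal measure on P(Γ) and M ⊆ Γ_V any set of vertices. Then either m({p ∈ Z(v) : s(p_k) ∈ M for infinitely many k}) = 0 for all v ∈ Γ_V, or m({p ∈ Z(v) : s(p_k) ∈ M for infinitely many k}) = m(Z(v)) for all v ∈ Γ_V. -/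
/-!
The set `visitsIO` of paths that meet `M` infinitely often is measurable and invariant under the
shift in the strong sense `σ p ∈ E ↔ p ∈ E`. If it has positive measure, the restriction of `m`
to it is again conformal (`Conformal.restrict`) and dominated by `m`, so extremality makes it a
positive multiple of `m`. Since the restriction gives no mass to the complement of `visitsIO`,
neither does `m`, and the set fills every cylinder `Z(v)` up to a null set.
-/

open MeasureTheory Filter Topology
open scoped ENNReal NNReal

namespace GraphKMS

variable {V A : Type}

/-- The event that a path visits the vertex set `M` infinitely often. -/
def visitsIO (s r : A → V) (M : Set V) : Set (PathSpace s r) :=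
  {p | {k : ℕ | s (p.seq k) ∈ M}.Infinite}

lemma measurableSet_visitsIO (s r : A → V) (M : Set V) :
    MeasurableSet (visitsIO s r M) := by
  have hk : ∀ k : ℕ, MeasurableSet {p : PathSpace s r | s (p.seq k) ∈ M} := fun k =>
    ⟨{f : ℕ → A | s (f k) ∈ M},
      (@measurable_pi_apply ℕ (fun _ => A) (fun _ => ⊤) k)
        (show MeasurableSet[⊤] {a : A | s a ∈ M} from trivial), rfl⟩
  have h : visitsIO s r M =
      ⋂ n : ℕ, ⋃ k : ℕ, ⋃ _ : n ≤ k, {p : PathSpace s r | s (p.seq k) ∈ M} := by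
    ext p
    simp only [visitsIO, Set.mem_setOf_eq, ← Nat.frequently_atTop_iff_infinite,
      frequently_atTop, Set.mem_iInter, Set.mem_iUnion, exists_prop]
  rw [h]
  exact MeasurableSet.iInter fun n => MeasurableSet.iUnion fun k =>
    MeasurableSet.iUnion fun _ => hk k

lemma shift_mem_visitsIO (s r : A → V) (M : Set V) (p : PathSpace s r) :
    shift s r p ∈ visitsIO s r M ↔ p ∈ visitsIO s r M := by
  simp only [visitsIO, Set.mem_setOf_eq, ← Nat.frequently_atTop_iff_infinite, shift]
  exact (frequently_map (m := fun k : ℕ => k + 1) (f := atTop)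
    (P := fun k => s (p.seq k) ∈ M)).symm.trans (by rw [map_add_atTop_eq_nat])

/-- Conformality only compares a set with its image under the shift, so it survives restriction
to a shift-invariant set of positive measure. -/
lemma Conformal.restrict {s r : A → V} {F : A → ℝ} {β : ℝ} {m : Measure (PathSpace s r)}
    (hm : Conformal s r F β m) {E : Set (PathSpace s r)} (hE : MeasurableSet E)
    (hinv : ∀ p, shift s r p ∈ E ↔ p ∈ E) (hpos : m E ≠ 0) :
    Conformal s r F β (m.restrict E) := by
  refine ⟨fun h => hpos (Measure.restrict_eq_zero.1 h), fun v => ?_, fun a B hB => ?_⟩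
  · exact ne_top_of_le_ne_top (hm.2.1 v) (Measure.restrict_apply_le _ _)
  · have himage : shift s r '' (B ∩ cylA s r a) ∩ E = shift s r '' (B ∩ E ∩ cylA s r a) := by
      ext q
      constructor
      · rintro ⟨⟨p, ⟨hpB, hpa⟩, rfl⟩, hq⟩
        exact ⟨p, ⟨⟨hpB, (hinv p).1 hq⟩, hpa⟩, rfl⟩
      · rintro ⟨p, ⟨⟨hpB, hpE⟩, hpa⟩, rfl⟩
        exact ⟨⟨p, ⟨hpB, hpa⟩, rfl⟩, (hinv p).2 hpE⟩
    rw [Measure.restrict_apply' hE, Measure.restrict_apply' hE, himage,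
      hm.2.2 a _ (hB.inter hE), Set.inter_right_comm]

/-- for an extremal `e^{βF}`-conformal measure `m` and any set of vertices `M`,
either `m({p ∈ Z(v) : s(p_k) ∈ M i.o.}) = 0` for all `v`, or it equals `m(Z(v))` for all
`v`. -/
theorem statement4 {V A : Type} [Countable V] [Countable A] (s r : A → V)
    (F : A → ℝ) (β : ℝ) (v₀ : V)
    (hv₀ : ∀ v : V, Green s r F β v₀ v ≠ 0 ∧ Green s r F β v₀ v ≠ ∞)
    (m : Measure (PathSpace s r)) (hm : ExtremalConformal s r F β m) (M : Set V) :
    (∀ v : V,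
      m {p : PathSpace s r | s (p.seq 0) = v ∧ {k : ℕ | s (p.seq k) ∈ M}.Infinite} = 0) ∨
    (∀ v : V,
      m {p : PathSpace s r | s (p.seq 0) = v ∧ {k : ℕ | s (p.seq k) ∈ M}.Infinite} =
        m (cylV s r v)) := by
  set E := visitsIO s r M with hE_def
  have hE : MeasurableSet E := measurableSet_visitsIO s r M
  have hset : ∀ v : V,
      {p : PathSpace s r | s (p.seq 0) = v ∧ {k : ℕ | s (p.seq k) ∈ M}.Infinite} =
        cylV s r v ∩ E := fun v => rfl
  simp only [hset]
  by_cases h0 : m E = 0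
  · exact Or.inl fun v => measure_mono_null Set.inter_subset_right h0
  · right
    obtain ⟨c, hc, hcm⟩ := hm.2 (m.restrict E)
      (hm.1.restrict hE (shift_mem_visitsIO s r M) h0)
      (fun B _ => Measure.restrict_apply_le _ _)
    have hcompl : m Eᶜ = 0 := by
      have h : (c : ℝ≥0∞) * m Eᶜ = 0 := by
        rw [← smul_eq_mul, ← Measure.smul_apply, ← hcm, Measure.restrict_apply' hE,
          Set.compl_inter_self, measure_empty]
      exact (mul_eq_zero.1 h).resolve_left (by exact_mod_cast hc.ne')
    exact fun v => measure_inter_conull hcompl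

end GraphKMS
end
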